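/- Let C be an Ord-category, R: X ↬ Y an ideal, and f: U→X, g: V→Y morphisms. Then the relation S ↣ U×V obtained as the 2-pullback of ⟨r₁,r₂⟩: R ↣ X×Y along f×g is an ideal, and S ≅ g°∘R∘f_♯. If moreover C is a regular Ord-category, then g°∘R∘f_♯ ≅ g^*∘R∘f_*; in particular, for an ideal T: X ↬ X the inverse image f⁻¹(T) along f is an ideal and f⁻¹(T) ≅ f^*∘T∘f_*. -/

import Mathlib

open CategoryTheory

universe w v u

/-- An `Ord`-enrichment of a category: a preorder on each hom-set,
preserved by composition on both sides. -/
class OrdEnrichment (C : Type u) [Category.{v} C] : Type (max u v) where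
  ord : ∀ {X Y : C}, (X ⟶ Y) → (X ⟶ Y) → Prop
  ord_refl : ∀ {X Y : C} (f : X ⟶ Y), ord f f
  ord_trans : ∀ {X Y : C} {f g h : X ⟶ Y}, ord f g → ord g h → ord f h
  precomp_ord : ∀ {X Y Z : C} (e : X ⟶ Y) {f g : Y ⟶ Z}, ord f g → ord (e ≫ f) (e ≫ g)
  postcomp_ord : ∀ {X Y Z : C} {f g : X ⟶ Y} (h : Y ⟶ Z), ord f g → ord (f ≫ h) (g ≫ h)

/-- The preorder on hom-sets of an `Ord`-category. -/
def homLe {C : Type u} [Category.{v} C] [OrdEnrichment C] {X Y : C} (f g : X ⟶ Y) : Prop :=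
  OrdEnrichment.ord f g

infixl:50 " ≼ " => homLe

section

variable {C : Type u} [Category.{v} C] [OrdEnrichment C]

/-- A full (ff-) morphism. -/
def IsFF {X Y : C} (m : X ⟶ Y) : Prop :=
  ∀ {A : C} (a a' : A ⟶ X), (a ≫ m) ≼ (a' ≫ m) → a ≼ a'

/-- An ff-monomorphism: a full monomorphism. -/
def IsFFMono {X Y : C} (m : X ⟶ Y) : Prop := IsFF m ∧ Mono m

/-- An so-morphism: a morphism left orthogonal to every ff-monomorphism. -/
def IsSO {A B : C} (e : A ⟶ B) : Prop :=
  ∀ {X Y : C} (m : X ⟶ Y), IsFFMono m → ∀ (u : A ⟶ X) (v : B ⟶ Y),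
    u ≫ m = e ≫ v → ∃ d : B ⟶ X, e ≫ d = u ∧ d ≫ m = v

/-- The (strict) comma object square for the ordered pair `(f, g)`. -/
structure IsCommaSq {X Y Z : C} (f : X ⟶ Y) (g : Z ⟶ Y) (P : C)
    (π₁ : P ⟶ X) (π₂ : P ⟶ Z) : Prop where
  le : (π₁ ≫ f) ≼ (π₂ ≫ g)
  lift : ∀ {A : C} (α : A ⟶ X) (β : A ⟶ Z), (α ≫ f) ≼ (β ≫ g) →
    ∃! h : A ⟶ P, h ≫ π₁ = α ∧ h ≫ π₂ = β
  lift_ord : ∀ {A : C} {h h' : A ⟶ P}, (h ≫ π₁) ≼ (h' ≫ π₁) → (h ≫ π₂) ≼ (h' ≫ π₂) → h ≼ h'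

/-- A 2-pullback square (pullback with the `Ord`-enriched universal property). -/
structure Is2Pullback {X Y Z : C} (f : X ⟶ Z) (g : Y ⟶ Z) (P : C)
    (p : P ⟶ X) (q : P ⟶ Y) : Prop where
  comm : p ≫ f = q ≫ g
  lift : ∀ {A : C} (a : A ⟶ X) (b : A ⟶ Y), a ≫ f = b ≫ g →
    ∃! h : A ⟶ P, h ≫ p = a ∧ h ≫ q = b
  lift_ord : ∀ {A : C} {h h' : A ⟶ P}, (h ≫ p) ≼ (h' ≫ p) → (h ≫ q) ≼ (h' ≫ q) → h ≼ h'

/-- A binary 2-product. -/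
structure Is2Product (X Y : C) (P : C) (p : P ⟶ X) (q : P ⟶ Y) : Prop where
  lift : ∀ {A : C} (a : A ⟶ X) (b : A ⟶ Y), ∃! h : A ⟶ P, h ≫ p = a ∧ h ≫ q = b
  lift_ord : ∀ {A : C} {h h' : A ⟶ P}, (h ≫ p) ≼ (h' ≫ p) → (h ≫ q) ≼ (h' ≫ q) → h ≼ h'

/-- A 2-equalizer. -/
structure Is2Equalizer {X Y : C} (f g : X ⟶ Y) (E : C) (i : E ⟶ X) : Prop where
  comm : i ≫ f = i ≫ g
  lift : ∀ {A : C} (a : A ⟶ X), a ≫ f = a ≫ g → ∃! h : A ⟶ E, h ≫ i = a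
  lift_ord : ∀ {A : C} {h h' : A ⟶ E}, (h ≫ i) ≼ (h' ≫ i) → h ≼ h'

/-- A bicoinserter of a parallel pair. -/
structure IsBicoinserter {X A E : C} (a b : X ⟶ A) (e : A ⟶ E) : Prop where
  le : (a ≫ e) ≼ (b ≫ e)
  desc : ∀ {F : C} (f : A ⟶ F), (a ≫ f) ≼ (b ≫ f) →
    ∃ t : E ⟶ F, (e ≫ t) ≼ f ∧ f ≼ (e ≫ t)
  desc_ord : ∀ {F : C} {f f' : A ⟶ F} {t t' : E ⟶ F},
    (e ≫ t) ≼ f → f ≼ (e ≫ t) → (e ≫ t') ≼ f' → f' ≼ (e ≫ t') → f ≼ f' → t ≼ t'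

/-- A relation from `X` to `Y` in an `Ord`-category: a jointly ff-monomorphic span. -/
structure RelStr (X Y : C) : Type (max u v) where
  obj : C
  p : obj ⟶ X
  q : obj ⟶ Y
  jointly_ff : ∀ {A : C} (a a' : A ⟶ obj), (a ≫ p) ≼ (a' ≫ p) → (a ≫ q) ≼ (a' ≫ q) → a ≼ a'
  jointly_mono : ∀ {A : C} (a a' : A ⟶ obj), a ≫ p = a' ≫ p → a ≫ q = a' ≫ q → a = a'

/-- `(x, y) ∈_A R`. -/
def RelStr.Mem {X Y : C} (R : RelStr X Y) {A : C} (x : A ⟶ X) (y : A ⟶ Y) : Prop :=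
  ∃ h : A ⟶ R.obj, h ≫ R.p = x ∧ h ≫ R.q = y

/-- `R ⊆ S`: `R` factors through `S` (over `X × Y`). -/
def RelStr.Sub {X Y : C} (R S : RelStr X Y) : Prop :=
  ∃ φ : R.obj ⟶ S.obj, φ ≫ S.p = R.p ∧ φ ≫ S.q = R.q

/-- `R ≅ S`: mutual factorisation. -/
def RelStr.Iso {X Y : C} (R S : RelStr X Y) : Prop := R.Sub S ∧ S.Sub R

/-- The opposite relation `R°`. -/
def RelStr.op {X Y : C} (R : RelStr X Y) : RelStr Y X where
  obj := R.obj
  p := R.q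
  q := R.p
  jointly_ff := fun a a' h1 h2 => R.jointly_ff a a' h2 h1
  jointly_mono := fun a a' h1 h2 => R.jointly_mono a a' h2 h1

/-- A relation is an (order) ideal when it is closed under lowering the first
coordinate and raising the second coordinate. -/
def IsIdealRel {X Y : C} (R : RelStr X Y) : Prop :=
  ∀ {A : C} (x x' : A ⟶ X) (y y' : A ⟶ Y), x' ≼ x → R.Mem x y → y ≼ y' → R.Mem x' y'

/-- The relation `f_♯` given by the span `(1_X, f)`. -/
def sharpRel {X Y : C} (f : X ⟶ Y) : RelStr X Y where
  obj := X
  p := 𝟙 X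
  q := f
  jointly_ff := fun a a' h1 _ => by simpa using h1
  jointly_mono := fun a a' h1 _ => by simpa using h1

/-- The relation `f°`, the opposite of `f_♯`. -/
def cosharpRel {X Y : C} (f : X ⟶ Y) : RelStr Y X := (sharpRel f).op

/-- `M` is the meet (intersection) `R ∧ S` of two relations. -/
def IsMeetRel {X Y : C} (R S M : RelStr X Y) : Prop :=
  M.Sub R ∧ M.Sub S ∧
    ∀ {A : C} (x : A ⟶ X) (y : A ⟶ Y), R.Mem x y → S.Mem x y → M.Mem x y

/-- `T` is the composite `S ∘ R` of the relations `R : X ↬ Y` and `S : Y ↬ Z`,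
obtained via the (so-morphism, ff-monomorphism) factorisation of the span
given by the 2-pullback over the middle object. -/
def IsCompositeRel {X Y Z : C} (R : RelStr X Y) (S : RelStr Y Z) (T : RelStr X Z) : Prop :=
  ∃ (P : C) (p₁ : P ⟶ R.obj) (p₂ : P ⟶ S.obj) (e : P ⟶ T.obj),
    Is2Pullback R.q S.p P p₁ p₂ ∧ IsSO e ∧ e ≫ T.p = p₁ ≫ R.p ∧ e ≫ T.q = p₂ ≫ S.q

/-- `R` is the ideal `f_* = f / 1_Y : X ↬ Y`. -/
def IsStarRel {X Y : C} (f : X ⟶ Y) (R : RelStr X Y) : Prop :=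
  IsCommaSq f (𝟙 Y) R.obj R.p R.q

/-- `R` is the ideal `f^* = 1_Y / f : Y ↬ X`. -/
def IsCostarRel {X Y : C} (f : X ⟶ Y) (R : RelStr Y X) : Prop :=
  IsCommaSq (𝟙 Y) f R.obj R.p R.q

/-- `R` is the identity ideal `I_X = 1_X / 1_X`. -/
def IsIdRel (X : C) (R : RelStr X X) : Prop :=
  IsCommaSq (𝟙 X) (𝟙 X) R.obj R.p R.q

/-- `S` is the 2-pullback of the relation `R ↣ X × Y` along `f × g`. -/
def IsRelPullback {X Y U V : C} (R : RelStr X Y) (f : U ⟶ X) (g : V ⟶ Y)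
    (S : RelStr U V) : Prop :=
  ∃ h : S.obj ⟶ R.obj, h ≫ R.p = S.p ≫ f ∧ h ≫ R.q = S.q ≫ g ∧
    ∀ {A : C} (a : A ⟶ U) (b : A ⟶ V) (c : A ⟶ R.obj),
      c ≫ R.p = a ≫ f → c ≫ R.q = b ≫ g →
      ∃ d : A ⟶ S.obj, d ≫ S.p = a ∧ d ≫ S.q = b ∧ d ≫ h = c

/-- A binary 2-coproduct. -/
structure Is2Coproduct (X Y : C) (P : C) (i : X ⟶ P) (j : Y ⟶ P) : Prop where
  desc : ∀ {A : C} (a : X ⟶ A) (b : Y ⟶ A), ∃! h : P ⟶ A, i ≫ h = a ∧ j ≫ h = b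
  desc_ord : ∀ {A : C} {h h' : P ⟶ A}, (i ≫ h) ≼ (i ≫ h') → (j ≫ h) ≼ (j ≫ h') → h ≼ h'

/-- A ternary 2-coproduct. -/
structure Is3Coproduct (X Y Z : C) (P : C) (i : X ⟶ P) (j : Y ⟶ P) (k : Z ⟶ P) : Prop where
  desc : ∀ {A : C} (a : X ⟶ A) (b : Y ⟶ A) (c : Z ⟶ A),
    ∃! h : P ⟶ A, i ≫ h = a ∧ j ≫ h = b ∧ k ≫ h = c
  desc_ord : ∀ {A : C} {h h' : P ⟶ A},
    (i ≫ h) ≼ (i ≫ h') → (j ≫ h) ≼ (j ≫ h') → (k ≫ h) ≼ (k ≫ h') → h ≼ h'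

/-- Reflexivity of a relation on `X`: the diagonal factors through it. -/
def ReflexiveRel {X : C} (R : RelStr X X) : Prop := R.Mem (𝟙 X) (𝟙 X)

/-- Transitivity of a relation on `X`: `R ∘ R ⊆ R`. -/
def TransitiveRel {X : C} (R : RelStr X X) : Prop :=
  ∀ T : RelStr X X, IsCompositeRel R R T → T.Sub R

/-- A congruence: a reflexive and transitive ideal. -/
def IsCongruence {X : C} (R : RelStr X X) : Prop :=
  IsIdealRel R ∧ ReflexiveRel R ∧ TransitiveRel R

/-- An effective congruence: `R ≅ f^* ∘ f_*` for some morphism `f`. -/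
def EffectiveCongruence {X : C} (R : RelStr X X) : Prop :=
  ∃ (Y : C) (f : X ⟶ Y) (Fstar : RelStr X Y) (Fco : RelStr Y X) (T : RelStr X X),
    IsStarRel f Fstar ∧ IsCostarRel f Fco ∧ IsCompositeRel Fstar Fco T ∧ R.Iso T

/-- The `Ord`-enriched difunctionality property of a relation. -/
def OrdDifunctional {X Y : C} (D : RelStr X Y) : Prop :=
  ∀ {A : C} (x u u' : A ⟶ X) (y y' v : A ⟶ Y),
    D.Mem x y → y ≼ y' → D.Mem u y' → u ≼ u' → D.Mem u' v → D.Mem x v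

end

/-- A regular `Ord`-category: finite weighted limits, an
(so-morphism, ff-monomorphism) factorisation system, so-morphisms stable under
2-pullbacks, and every so-morphism the bicoinserter of its comma object projections. -/
structure IsRegularOrd (C : Type u) [Category.{v} C] [OrdEnrichment C] : Prop where
  hasTerminal : ∃ T : C, ∀ A : C, ∃ f : A ⟶ T, ∀ g : A ⟶ T, g = f
  has2Products : ∀ X Y : C, ∃ (P : C) (p : P ⟶ X) (q : P ⟶ Y), Is2Product X Y P p q
  has2Equalizers : ∀ {X Y : C} (f g : X ⟶ Y), ∃ (E : C) (i : E ⟶ X), Is2Equalizer f g E i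
  has2Pullbacks : ∀ {X Y Z : C} (f : X ⟶ Z) (g : Y ⟶ Z),
    ∃ (P : C) (p : P ⟶ X) (q : P ⟶ Y), Is2Pullback f g P p q
  hasCommaObjects : ∀ {X Y Z : C} (f : X ⟶ Y) (g : Z ⟶ Y),
    ∃ (P : C) (p : P ⟶ X) (q : P ⟶ Z), IsCommaSq f g P p q
  fact : ∀ {X Y : C} (f : X ⟶ Y), ∃ (I : C) (e : X ⟶ I) (m : I ⟶ Y),
    IsSO e ∧ IsFFMono m ∧ e ≫ m = f
  so_pullback_stable : ∀ {X Y Z P : C} (f : X ⟶ Z) (g : Y ⟶ Z) (p : P ⟶ X) (q : P ⟶ Y),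
    Is2Pullback f g P p q → IsSO g → IsSO p
  so_bicoinserter : ∀ {A B P : C} (e : A ⟶ B), IsSO e →
    ∀ (π₁ π₂ : P ⟶ A), IsCommaSq e e P π₁ π₂ → IsBicoinserter π₁ π₂ e

/-- An `Ord`-Mal'tsev category: every ideal is `Ord`-difunctional. -/
def IsOrdMaltsev (C : Type u) [Category.{v} C] [OrdEnrichment C] : Prop :=
  ∀ (X Y : C) (D : RelStr X Y), IsIdealRel D → OrdDifunctional D

/-- An `Ord`-W-Mal'tsev object: every ideal is `Ord`-difunctional with respect to
generalised elements with domain `Y`. -/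
def IsOrdWMaltsevObj {C : Type u} [Category.{v} C] [OrdEnrichment C] (Y : C) : Prop :=
  ∀ (X Z : C) (R : RelStr X Z), IsIdealRel R →
    ∀ (x u u' : Y ⟶ X) (z z' v : Y ⟶ Z),
      R.Mem x z → z ≼ z' → R.Mem u z' → u ≼ u' → R.Mem u' v → R.Mem x v


section Helpers

variable {C : Type u} [Category.{v} C] [OrdEnrichment C]

theorem homLe_refl {X Y : C} (f : X ⟶ Y) : f ≼ f := OrdEnrichment.ord_refl f

theorem homLe_pre {X Y Z : C} (e : X ⟶ Y) {f g : Y ⟶ Z} (h : f ≼ g) : (e ≫ f) ≼ (e ≫ g) :=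
  OrdEnrichment.precomp_ord e h

theorem homLe_post {X Y Z : C} {f g : X ⟶ Y} (k : Y ⟶ Z) (h : f ≼ g) : (f ≫ k) ≼ (g ≫ k) :=
  OrdEnrichment.postcomp_ord k h

theorem mem_self {X Y : C} (R : RelStr X Y) : R.Mem R.p R.q := ⟨𝟙 _, by simp, by simp⟩

theorem mem_pre {X Y : C} {R : RelStr X Y} {A B : C} (b : B ⟶ A) {x : A ⟶ X} {y : A ⟶ Y}
    (h : R.Mem x y) : R.Mem (b ≫ x) (b ≫ y) := by
  obtain ⟨k, rfl, rfl⟩ := h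
  exact ⟨b ≫ k, by simp, by simp⟩

theorem iso_trans {X Y : C} {R S T : RelStr X Y} (h : R.Iso S) (h' : S.Iso T) : R.Iso T := by
  obtain ⟨⟨a, ha, ha'⟩, ⟨b, hb, hb'⟩⟩ := h
  obtain ⟨⟨c, hc, hc'⟩, ⟨d, hd, hd'⟩⟩ := h'
  exact ⟨⟨a ≫ c, by simp [*], by simp [*]⟩, ⟨d ≫ b, by simp [*], by simp [*]⟩⟩

theorem iso_symm {X Y : C} {R S : RelStr X Y} (h : R.Iso S) : S.Iso R := ⟨h.2, h.1⟩

/-- Membership in the 2-pullback of a relation. -/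
theorem relPullback_mem {X Y U V : C} {R : RelStr X Y} {f : U ⟶ X} {g : V ⟶ Y}
    {S : RelStr U V} (hS : IsRelPullback R f g S) {A : C} (a : A ⟶ U) (b : A ⟶ V) :
    S.Mem a b ↔ R.Mem (a ≫ f) (b ≫ g) := by
  obtain ⟨h, hp, hq, hl⟩ := hS
  constructor
  · rintro ⟨k, rfl, rfl⟩
    exact ⟨k ≫ h, by simp [hp], by simp [hq]⟩
  · rintro ⟨c, h1, h2⟩
    obtain ⟨d, h3, h4, -⟩ := hl a b c h1 h2
    exact ⟨d, h3, h4⟩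

theorem relPullback_ideal {X Y U V : C} {R : RelStr X Y} (hR : IsIdealRel R)
    {f : U ⟶ X} {g : V ⟶ Y} {S : RelStr U V} (hS : IsRelPullback R f g S) : IsIdealRel S := by
  intro A x x' y y' hx h hy
  rw [relPullback_mem hS] at h ⊢
  exact hR _ _ _ _ (homLe_post f hx) h (homLe_post g hy)

theorem comp_mem {X Y Z : C} {R : RelStr X Y} {S : RelStr Y Z} {T : RelStr X Z}
    (h : IsCompositeRel R S T) {A : C} {x : A ⟶ X} {y : A ⟶ Y} {z : A ⟶ Z}
    (h1 : R.Mem x y) (h2 : S.Mem y z) : T.Mem x z := by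
  obtain ⟨P, p₁, p₂, e, hP, -, ep, eq⟩ := h
  obtain ⟨a, rfl, ha⟩ := h1
  obtain ⟨b, hb, rfl⟩ := h2
  obtain ⟨k, ⟨rfl, rfl⟩, -⟩ := hP.lift a b (ha.trans hb.symm)
  exact ⟨k ≫ e, by simp [ep], by simp [eq]⟩

/-- An so-morphism which is an ff-monomorphism is split epi. -/
theorem so_ff_section {A B : C} {e : A ⟶ B} (he : IsSO e) (hm : IsFFMono e) :
    ∃ d : B ⟶ A, d ≫ e = 𝟙 B := by
  obtain ⟨d, -, h⟩ := he e hm (𝟙 A) (𝟙 B) (by simp)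
  exact ⟨d, h⟩

theorem sharp_comp_mem {X Y U : C} {R : RelStr X Y} {f : U ⟶ X} {T : RelStr U Y}
    (h : IsCompositeRel (sharpRel f) R T) {A : C} {x : A ⟶ U} {y : A ⟶ Y}
    (hm : T.Mem x y) : R.Mem (x ≫ f) y := by
  obtain ⟨P, (p₁ : P ⟶ U), p₂, e, hP, he, ep, eq⟩ := h
  replace hP : Is2Pullback f R.p P p₁ p₂ := hP
  have hc : p₁ ≫ f = p₂ ≫ R.p := hP.comm
  have ep' : e ≫ T.p = p₁ := by exact ep.trans <| Category.comp_id _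
  have hff : IsFFMono e := by
    constructor
    · intro A a a' haa
      have h1 : (a ≫ p₁) ≼ (a' ≫ p₁) := by
        simpa [ep'] using homLe_post T.p haa
      have h2 : (a ≫ p₂ ≫ R.q) ≼ (a' ≫ p₂ ≫ R.q) := by
        simpa [eq] using homLe_post T.q haa
      refine hP.lift_ord h1 (R.jointly_ff _ _ ?_ ?_)
      · simpa [← hc] using homLe_post f h1
      · simpa using h2
    · constructor
      intro A a a' haa
      have h1 : a ≫ p₁ = a' ≫ p₁ := by
        have := congrArg (· ≫ T.p) haa
        simpa [ep'] using this
      have h2 : a ≫ p₂ ≫ R.q = a' ≫ p₂ ≫ R.q := by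
        have := congrArg (· ≫ T.q) haa
        simpa [eq] using this
      have h3 : a ≫ p₂ = a' ≫ p₂ := by
        refine R.jointly_mono _ _ ?_ (by simpa using h2)
        have := congrArg (· ≫ f) h1
        simpa [← hc] using this
      have hw : (a ≫ p₁) ≫ f = (a ≫ p₂) ≫ R.p := by
        simp only [Category.assoc, hP.comm]
      exact (hP.lift _ _ hw).unique ⟨rfl, rfl⟩ ⟨h1.symm, h3.symm⟩
  obtain ⟨d, hd⟩ := so_ff_section he hff
  obtain ⟨k, rfl, rfl⟩ := hm
  refine ⟨k ≫ d ≫ p₂, ?_, ?_⟩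
  · simp only [Category.assoc, ← hc, ← ep']
    simp only [Category.assoc, reassoc_of% hd]
  · simp only [Category.assoc, ← eq]
    simp only [Category.assoc, reassoc_of% hd]

theorem cosharp_comp_mem {U Y V : C} {R : RelStr U Y} {g : V ⟶ Y} {T : RelStr U V}
    (h : IsCompositeRel R (cosharpRel g) T) {A : C} {x : A ⟶ U} {y : A ⟶ V}
    (hm : T.Mem x y) : R.Mem x (y ≫ g) := by
  obtain ⟨P, p₁, (p₂ : P ⟶ V), e, hP, he, ep, eq⟩ := h
  replace hP : Is2Pullback R.q g P p₁ p₂ := hP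
  have hc : p₁ ≫ R.q = p₂ ≫ g := hP.comm
  have eq' : e ≫ T.q = p₂ := by exact eq.trans <| Category.comp_id _
  have hff : IsFFMono e := by
    constructor
    · intro A a a' haa
      have h1 : (a ≫ p₂) ≼ (a' ≫ p₂) := by
        simpa [eq'] using homLe_post T.q haa
      have h2 : (a ≫ p₁ ≫ R.p) ≼ (a' ≫ p₁ ≫ R.p) := by
        simpa [ep] using homLe_post T.p haa
      refine hP.lift_ord (R.jointly_ff _ _ ?_ ?_) h1
      · simpa using h2
      · simpa [hc] using homLe_post g h1
    · constructor
      intro A a a' haa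
      have h1 : a ≫ p₂ = a' ≫ p₂ := by
        have := congrArg (· ≫ T.q) haa
        simpa [eq'] using this
      have h2 : a ≫ p₁ ≫ R.p = a' ≫ p₁ ≫ R.p := by
        have := congrArg (· ≫ T.p) haa
        simpa [ep] using this
      have h3 : a ≫ p₁ = a' ≫ p₁ := by
        refine R.jointly_mono _ _ (by simpa using h2) ?_
        have := congrArg (· ≫ g) h1
        simpa [hc] using this
      have hw : (a ≫ p₁) ≫ R.q = (a ≫ p₂) ≫ g := by
        simp only [Category.assoc, hP.comm]
      exact (hP.lift _ _ hw).unique ⟨rfl, rfl⟩ ⟨h3.symm, h1.symm⟩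
  obtain ⟨d, hd⟩ := so_ff_section he hff
  obtain ⟨k, rfl, rfl⟩ := hm
  refine ⟨k ≫ d ≫ p₁, ?_, ?_⟩
  · simp only [Category.assoc, ← ep]
    simp only [Category.assoc, reassoc_of% hd]
  · simp only [Category.assoc, hc, ← eq']
    simp only [Category.assoc, reassoc_of% hd]

theorem sharp_mem {X Y A : C} (f : X ⟶ Y) (x : A ⟶ X) : (sharpRel f).Mem x (x ≫ f) :=
  ⟨x, Category.comp_id _, rfl⟩

theorem cosharp_mem {X Y A : C} (f : X ⟶ Y) (x : A ⟶ X) : (cosharpRel f).Mem (x ≫ f) x :=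
  ⟨x, rfl, Category.comp_id _⟩

theorem pullback_iso_sharp {X Y U V : C} {R : RelStr X Y}
    {f : U ⟶ X} {g : V ⟶ Y} {S : RelStr U V} (hS : IsRelPullback R f g S)
    {T1 : RelStr U Y} {T2 : RelStr U V}
    (h1 : IsCompositeRel (sharpRel f) R T1) (h2 : IsCompositeRel T1 (cosharpRel g) T2) :
    S.Iso T2 := by
  constructor
  · exact comp_mem h2 (comp_mem h1 (sharp_mem f S.p)
      ((relPullback_mem hS _ _).1 (mem_self S))) (cosharp_mem g S.q)
  · exact (relPullback_mem hS _ _).2 (sharp_comp_mem h1 (cosharp_comp_mem h2 (mem_self T2)))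

/-- In the presence of binary 2-products, membership descends along so-morphisms. -/
theorem mem_of_so (hC : IsRegularOrd C) {X Y : C} {R : RelStr X Y} {A B : C} {e : A ⟶ B}
    (he : IsSO e) {x : B ⟶ X} {y : B ⟶ Y} (h : R.Mem (e ≫ x) (e ≫ y)) : R.Mem x y := by
  obtain ⟨P, p, q, hP⟩ := hC.has2Products X Y
  obtain ⟨m, ⟨mp, mq⟩, -⟩ := hP.lift R.p R.q
  obtain ⟨w, ⟨wp, wq⟩, -⟩ := hP.lift x y
  obtain ⟨k, kp, kq⟩ := h
  have hm : IsFFMono m := by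
    constructor
    · intro A a a' haa
      refine R.jointly_ff _ _ ?_ ?_
      · simpa [mp] using homLe_post p haa
      · simpa [mq] using homLe_post q haa
    · constructor
      intro A a a' haa
      refine R.jointly_mono _ _ ?_ ?_
      · have := congrArg (· ≫ p) haa
        simpa [mp] using this
      · have := congrArg (· ≫ q) haa
        simpa [mq] using this
  obtain ⟨d, -, hd⟩ := he m hm k w
    ((hP.lift (e ≫ x) (e ≫ y)).unique ⟨by simp [mp, kp], by simp [mq, kq]⟩
      ⟨by simp [wp], by simp [wq]⟩)
  exact ⟨d, by rw [← mp, ← wp, ← hd, Category.assoc], by rw [← mq, ← wq, ← hd, Category.assoc]⟩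

theorem pullback_iso_star (hC : IsRegularOrd C) {X Y U V : C} {R : RelStr X Y}
    (hR : IsIdealRel R) {f : U ⟶ X} {g : V ⟶ Y} {S : RelStr U V} (hS : IsRelPullback R f g S)
    {Fstar : RelStr U X} {Gco : RelStr Y V} (hF : IsStarRel f Fstar) (hG : IsCostarRel g Gco)
    {T1 : RelStr U Y} {T2 : RelStr U V}
    (h1 : IsCompositeRel Fstar R T1) (h2 : IsCompositeRel T1 Gco T2) :
    S.Iso T2 := by
  constructor
  · refine comp_mem h2 (comp_mem h1 (y := S.p ≫ f) ?_
      ((relPullback_mem hS _ _).1 (mem_self S))) ?_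
    · exact (hF.lift S.p (S.p ≫ f) (by simpa using homLe_refl _)).exists
    · exact (hG.lift (S.q ≫ g) S.q (by simpa using homLe_refl _)).exists
  · have key : R.Mem (T1.p ≫ f) T1.q := by
      obtain ⟨P, p₁, p₂, e, hP, he, ep, eq⟩ := h1
      refine mem_of_so hC he ?_
      have hle : (p₁ ≫ Fstar.p ≫ f) ≼ (p₁ ≫ Fstar.q) := by
        simpa using homLe_pre p₁ hF.le
      refine hR _ _ _ _ ?_ (mem_pre p₂ (mem_self R)) ?_
      · rw [← hP.comm, reassoc_of% ep]
        exact hle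
      · rw [eq]
        exact homLe_refl _
    refine (relPullback_mem hS _ _).2 ?_
    obtain ⟨P, p₁, p₂, e, hP, he, ep, eq⟩ := h2
    refine mem_of_so hC he ?_
    have hle : (p₂ ≫ Gco.p) ≼ (p₂ ≫ Gco.q ≫ g) := by
      simpa using homLe_pre p₂ hG.le
    refine hR _ _ _ _ ?_ (mem_pre p₁ key) ?_
    · rw [reassoc_of% ep]
      exact homLe_refl _
    · rw [hP.comm, reassoc_of% eq]
      exact hle

end Helpers

/-- The 2-pullback of an ideal along `f × g` is an ideal isomorphic to `g° ∘ R ∘ f_♯`;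
in the regular case it is also `g^* ∘ R ∘ f_*`; in particular inverse images of
ideals are ideals, with `f⁻¹(T) ≅ f^* ∘ T ∘ f_*`. -/
theorem statement10 {C : Type u} [Category.{v} C] [OrdEnrichment C]
    {X Y U V : C} (R : RelStr X Y) (hR : IsIdealRel R)
    (f : U ⟶ X) (g : V ⟶ Y) (S : RelStr U V) (hS : IsRelPullback R f g S) :
    IsIdealRel S ∧
    (∀ (T1 : RelStr U Y) (T2 : RelStr U V),
      IsCompositeRel (sharpRel f) R T1 → IsCompositeRel T1 (cosharpRel g) T2 →
      S.Iso T2) ∧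
    (IsRegularOrd C →
      (∀ (Fstar : RelStr U X) (Gco : RelStr Y V)
         (T1 : RelStr U Y) (T2 : RelStr U V) (T1' : RelStr U Y) (T2' : RelStr U V),
        IsStarRel f Fstar → IsCostarRel g Gco →
        IsCompositeRel (sharpRel f) R T1 → IsCompositeRel T1 (cosharpRel g) T2 →
        IsCompositeRel Fstar R T1' → IsCompositeRel T1' Gco T2' →
        T2.Iso T2') ∧
      (∀ (Tid : RelStr X X), IsIdealRel Tid →
        ∀ (S' : RelStr U U), IsRelPullback Tid f f S' →
          IsIdealRel S' ∧
          ∀ (Fstar : RelStr U X) (Fco : RelStr X U)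
            (W1 : RelStr U X) (W2 : RelStr U U),
            IsStarRel f Fstar → IsCostarRel f Fco →
            IsCompositeRel Fstar Tid W1 → IsCompositeRel W1 Fco W2 →
            S'.Iso W2)) := by
  refine ⟨relPullback_ideal hR hS, fun T1 T2 h1 h2 => pullback_iso_sharp hS h1 h2,
    fun hC => ⟨?_, ?_⟩⟩
  · intro Fstar Gco T1 T2 T1' T2' hF hG h1 h2 h1' h2'
    exact iso_trans (iso_symm (pullback_iso_sharp hS h1 h2))
      (pullback_iso_star hC hR hS hF hG h1' h2')
  · intro Tid hT S' hS'
    exact ⟨relPullback_ideal hT hS', fun Fstar Fco W1 W2 hF hG h1 h2 =>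
      pullback_iso_star hC hT hS' hF hG h1 h2⟩
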